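/- Let T = {1342, 2413, 3412} (patterns of length 4). Then the generating function for T-avoiders satisfies, as formal power series over ℚ, ((x^2-3x+1)·(2x^2-2x+1) - x·(1-2x)·(1-x)·C(x))·(F_T(x) - 1) = x·(1-x)^2·(1-2x), where C(x) is the Catalan number generating function; that is, F_T(x) = 1 + x(1-x)^2(1-2x)/((x^2-3x+1)(2x^2-2x+1) - x(1-2x)(1-x)C(x)). -/

import Mathlib

open PowerSeries

/-- A permutation `π` of `{0,…,n-1}` contains the pattern `σ` (of length `k`) if there is an
order-embedding of positions on which the values of `π` appear in the same relative order as
the values of `σ`. -/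
def ContainsPattern {n k : ℕ} (π : Equiv.Perm (Fin n)) (σ : Fin k → Fin k) : Prop :=
  ∃ f : Fin k ↪o Fin n, ∀ a b : Fin k, σ a < σ b ↔ π (f a) < π (f b)

/-- The number of permutations of length `n` avoiding every pattern in `T`. -/
noncomputable def avoiderCount (T : Set (Fin 4 → Fin 4)) (n : ℕ) : ℕ :=
  Nat.card {π : Equiv.Perm (Fin n) // ∀ σ ∈ T, ¬ ContainsPattern π σ}

/-- The generating function `F_T(x) = ∑_n |S_n(T)| xⁿ` over `ℚ`. -/
noncomputable def avoiderGF (T : Set (Fin 4 → Fin 4)) : PowerSeries ℚ :=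
  PowerSeries.mk fun n => (avoiderCount T n : ℚ)

/-- The generating function of the Catalan numbers over `ℚ`. -/
noncomputable def catalanGF : PowerSeries ℚ :=
  PowerSeries.mk fun n => (catalan n : ℚ)

/-!
Split a nonempty avoider as `L n R` around its largest letter `n`, and let `A` and `Q` be the
generating functions of the nonempty avoiders and of those with `L` nonempty, the latter by the
size of `L R`. If `L` is empty, then `R` is an arbitrary avoider, so `A = X (1 + A) + X Q`. If `L`
is nonempty, exactly one of the following holds.

* Every letter of `L` is smaller than every letter of `R`. The words are those for which `L` avoids
  `T` and `R` avoids `231` (a `231` in `R` and a letter of `L` form a `1342`), which gives `A C`.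
* The last letter is the smallest one. It takes part in no pattern, so deleting it gives `X Q`.
* Some letter of `L` exceeds one of `R`, and the last letter `b` is not the smallest. Then the word
  is `D M n R' b`, where `M` consists of all letters below `b`, while `D` and `R'` are decreasing.
  The nonempty word `M` is an arbitrary avoider, and `D` is any nonempty subset of the `j` letters
  above `b` other than `n`, which gives `X A W` with `W = ∑ (2 ^ j - 1) X ^ j`.

Hence `Q = A C + X Q + X A W`, and the theorem follows by eliminating `Q`.
-/

section Words

open List

section Sublists

variable {α β : Type*}

lemma triplewise_iff_forall_sublist {p : α → α → α → Prop} {l : List α} :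
    l.Triplewise p ↔ ∀ a b c, [a, b, c] <+ l → p a b c := by
  induction l with
  | nil => simp
  | cons x l ih =>
    rw [triplewise_cons, ih, pairwise_iff_forall_sublist]
    grind

lemma filter_append_filter_not_of_pairwise {p : α → Bool} {l : List α}
    (h : l.Pairwise fun x y => p y → p x) :
    l.filter p ++ l.filter (fun x => !p x) = l := by
  induction l with
  | nil => rfl
  | cons x l ih =>
    rw [pairwise_cons] at h
    by_cases hx : p x
    · simpa [hx] using ih h.2
    · have hl : ∀ y ∈ l, ¬ p y := fun y hy hp => hx (h.1 y hy hp)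
      have hfilter : l.filter p = [] := filter_eq_nil_iff.2 hl
      simpa [hx, hfilter] using ih h.2

/-- The relation `p` holds for every four letters of `l` taken in order of position; the
analogue of `List.Pairwise` and `List.Triplewise`. -/
def Quadruplewise (p : α → α → α → α → Prop) (l : List α) : Prop :=
  ∀ a b c d, [a, b, c, d] <+ l → p a b c d

variable {p : α → α → α → α → Prop}

lemma Quadruplewise.sublist {l m : List α} (hl : Quadruplewise p l) (h : m <+ l) :
    Quadruplewise p m :=
  fun a b c d hm => hl a b c d (hm.trans h)

lemma quadruplewise_nil : Quadruplewise p [] := by simp [Quadruplewise]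

lemma quadruplewise_cons {x : α} {l : List α} :
    Quadruplewise p (x :: l) ↔ l.Triplewise (p x) ∧ Quadruplewise p l := by
  rw [triplewise_iff_forall_sublist]
  grind [Quadruplewise]

lemma quadruplewise_append {l m : List α} :
    Quadruplewise p (l ++ m) ↔ Quadruplewise p l ∧ Quadruplewise p m ∧
      (∀ a ∈ l, m.Triplewise (p a)) ∧
      l.Pairwise (fun a b => m.Pairwise (p a b)) ∧
      ∀ d ∈ m, l.Triplewise (fun a b c => p a b c d) := by
  induction l with
  | nil => simp [quadruplewise_nil]
  | cons x l ih =>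
    simp only [cons_append, quadruplewise_cons, triplewise_append, triplewise_cons,
      pairwise_cons, ih]
    grind

lemma quadruplewise_map {q : β → β → β → β → Prop} {f : α → β} {l : List α} :
    Quadruplewise q (l.map f) ↔ Quadruplewise (fun a b c d => q (f a) (f b) (f c) (f d)) l := by
  induction l with
  | nil => simp [quadruplewise_nil]
  | cons x l ih => simp [quadruplewise_cons, triplewise_map, ih]

end Sublists

section Avoid

variable {α β : Type*} [LinearOrder α] [LinearOrder β]

/-- The letters `a b c d` are in the relative order of `1342`, `2413` or `3412`. -/
def IsTPattern (a b c d : α) : Prop :=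
  (a < d ∧ d < b ∧ b < c) ∨ (c < a ∧ a < d ∧ d < b) ∨ (c < d ∧ d < a ∧ a < b)

lemma IsTPattern.fst_lt_snd {a b c d : α} (h : IsTPattern a b c d) : a < b := by
  grind [IsTPattern]

/-- The word `l` contains none of `1342`, `2413` and `3412`. -/
def AvoidsT (l : List α) : Prop :=
  Quadruplewise (fun a b c d => ¬ IsTPattern a b c d) l

/-- The word `l` does not contain `231`. -/
def Avoids231 (l : List α) : Prop :=
  l.Triplewise fun a b c => ¬ (c < a ∧ a < b)

lemma Avoids231.sublist {l m : List α} (hl : Avoids231 l) (h : m <+ l) : Avoids231 m := by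
  rw [Avoids231, triplewise_iff_forall_sublist] at hl ⊢
  exact fun a b c hm => hl a b c (hm.trans h)

lemma AvoidsT.sublist {l m : List α} (hl : AvoidsT l) (h : m <+ l) : AvoidsT m :=
  Quadruplewise.sublist hl h

lemma avoids231_map_iff {f : α → β} (hf : StrictMono f) {l : List α} :
    Avoids231 (l.map f) ↔ Avoids231 l := by
  simp only [Avoids231, triplewise_map, hf.lt_iff_lt]

lemma avoidsT_map_iff {f : α → β} (hf : StrictMono f) {l : List α} :
    AvoidsT (l.map f) ↔ AvoidsT l := by
  simp only [AvoidsT, quadruplewise_map, IsTPattern, hf.lt_iff_lt]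

lemma Avoids231.append {l m : List α} (hl : Avoids231 l) (hm : Avoids231 m)
    (hlm : ∀ x ∈ l, ∀ y ∈ m, x < y) : Avoids231 (l ++ m) := by
  refine triplewise_append.2 ⟨hl, hm, fun a ha => ?_, fun c hc => ?_⟩
  · exact pairwise_iff_forall_sublist.2 fun {b c} h hcab =>
      (hlm a ha c (h.subset (by simp))).not_gt hcab.1
  · exact pairwise_iff_forall_sublist.2 fun {a b} h hcab =>
      (hlm a (h.subset (by simp)) c hc).not_gt hcab.1

lemma Avoids231.lt_of_mem {l m : List α} {n x y : α} (h : Avoids231 (l ++ n :: m))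
    (hnd : (l ++ n :: m).Nodup) (hl : ∀ x ∈ l, x < n) (hx : x ∈ l) (hy : y ∈ m) : x < y := by
  have hsub : [x, n, y] <+ l ++ n :: m :=
    (singleton_sublist.2 hx).append ((singleton_sublist.2 hy).cons_cons n)
  have hxy : x ≠ y :=
    ne_of_mem_of_not_mem hx fun hyl => disjoint_of_nodup_append hnd hyl (mem_cons_of_mem n hy)
  by_contra! hle
  exact triplewise_iff_forall_sublist.1 h x n y hsub ⟨hle.lt_of_ne' hxy, hl x hx⟩

lemma AvoidsT.cons {n : α} {l : List α} (hl : AvoidsT l) (hn : ∀ x ∈ l, x < n) :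
    AvoidsT (n :: l) := by
  refine quadruplewise_cons.2 ⟨triplewise_iff_forall_sublist.2 ?_, hl⟩
  grind [IsTPattern]

lemma AvoidsT.concat {n : α} {l : List α} (hl : AvoidsT l) (hn : ∀ x ∈ l, n < x) :
    AvoidsT (l ++ [n]) := by
  refine quadruplewise_append.2 ⟨hl, ?_, ?_, ?_, ?_⟩
  · simp [Quadruplewise]
  · simp
  · simp [pairwise_iff_forall_sublist]
  · simp only [triplewise_iff_forall_sublist]
    grind [IsTPattern]

lemma Avoids231.avoidsT {l : List α} (hl : Avoids231 l) : AvoidsT l := by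
  intro a b c d h
  rw [Avoids231, triplewise_iff_forall_sublist] at hl
  have habc := hl a b c (.trans (by simp) h)
  have habd := hl a b d (.trans (by simp) h)
  have hbcd := hl b c d (.trans (by simp) h)
  grind [IsTPattern]

lemma AvoidsT.append {l m : List α} (hl : AvoidsT l) (hm : Avoids231 m)
    (hlm : ∀ x ∈ l, ∀ y ∈ m, x < y) : AvoidsT (l ++ m) := by
  refine quadruplewise_append.2 ⟨hl, hm.avoidsT, fun a ha => ?_, ?_, fun d hd => ?_⟩
  · refine triplewise_iff_forall_sublist.2 fun b c d h => ?_
    have hbcd := triplewise_iff_forall_sublist.1 hm b c d h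
    have had := hlm a ha d (h.subset (by simp))
    have hac := hlm a ha c (h.subset (by simp))
    grind [IsTPattern]
  · simp only [pairwise_iff_forall_sublist]
    intro a b hab c d hcd
    have hbd := hlm b (hab.subset (by simp)) d (hcd.subset (by simp))
    grind [IsTPattern]
  · refine triplewise_iff_forall_sublist.2 fun a b c h => ?_
    have hbd := hlm b (h.subset (by simp)) d hd
    grind [IsTPattern]

lemma Avoids231.cons {n : α} {l : List α} (hl : Avoids231 l) (hn : ∀ x ∈ l, x < n) :
    Avoids231 (n :: l) := by
  refine triplewise_cons.2 ⟨pairwise_iff_forall_sublist.2 ?_, hl⟩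
  grind

lemma avoids231_of_pairwise_gt {l : List α} (hl : l.Pairwise (· > ·)) : Avoids231 l := by
  rw [Avoids231, triplewise_iff_forall_sublist]
  intro a b c h
  grind [pairwise_iff_forall_sublist]

lemma AvoidsT.decreasing_append_append {l m e : List α} (hm : AvoidsT m)
    (hl : l.Pairwise (· > ·)) (he : e.Pairwise (· > ·))
    (hlm : ∀ x ∈ l, ∀ y ∈ m, y < x) (hme : ∀ x ∈ m, ∀ y ∈ e, x < y) :
    AvoidsT (l ++ (m ++ e)) := by
  refine quadruplewise_append.2 ⟨(avoids231_of_pairwise_gt hl).avoidsT,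
    hm.append (avoids231_of_pairwise_gt he) hme, fun a ha => ?_, ?_, fun d _ => ?_⟩
  · have ham {b c d : α} (hb : b ∈ m) : ¬ IsTPattern a b c d :=
      fun hT => (hlm a ha b hb).not_gt hT.fst_lt_snd
    rw [triplewise_append]
    refine ⟨?_, ?_, fun b hb => ?_, fun d _ => ?_⟩
    · exact triplewise_iff_forall_sublist.2 fun b c d h => ham (h.subset (by simp))
    · refine triplewise_iff_forall_sublist.2 fun b c d h => ?_
      have hbcd := he.sublist h
      simp only [pairwise_cons, mem_cons] at hbcd
      grind [IsTPattern]
    · exact pairwise_iff_forall_sublist.2 fun _ => ham hb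
    · exact pairwise_iff_forall_sublist.2 fun h => ham (h.subset (by simp))
  · refine hl.imp fun hab => pairwise_iff_forall_sublist.2 fun _ hT => ?_
    exact hab.not_gt hT.fst_lt_snd
  · refine triplewise_iff_forall_sublist.2 fun a b c h hT => ?_
    have hab : a > b := pairwise_iff_forall_sublist.1 hl (.trans (by simp) h)
    exact hab.not_gt hT.fst_lt_snd

lemma AvoidsT.avoids231_of_lt {l m : List α} {a : α} (h : AvoidsT (l ++ m)) (ha : a ∈ l)
    (hm : ∀ x ∈ m, a < x) : Avoids231 m := by
  refine triplewise_iff_forall_sublist.2 fun x y z hxyz hzxy => ?_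
  have haz := hm z (hxyz.subset (by simp))
  exact h a x y z ((singleton_sublist.2 ha).append hxyz) (Or.inl ⟨haz, hzxy⟩)

section Hook

variable {l r : List α} {n b x y z : α}

lemma AvoidsT.last_lt_of_lt_left (h : AvoidsT (l ++ n :: (r ++ [b]))) (hl : ∀ x ∈ l, x < n)
    (hbl : b ∉ l) (hbr : b ∉ r) (hbn : b < n) (hx : x ∈ l) (hy : y ∈ r) (hyx : y < x) :
    b < y := by
  have hnyb : [n, y, b] <+ n :: (r ++ [b]) :=
    ((singleton_sublist.2 hy).append (Sublist.refl [b])).cons_cons n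
  have hnT : ¬ IsTPattern x n y b := h _ _ _ _ ((singleton_sublist.2 hx).append hnyb)
  have hxn := hl x hx
  have hxb : x ≠ b := ne_of_mem_of_not_mem hx hbl
  have hyb : y ≠ b := ne_of_mem_of_not_mem hy hbr
  clear h hnyb hl
  grind [IsTPattern]

lemma AvoidsT.last_lt_of_inversion (h : AvoidsT (l ++ n :: (r ++ [b]))) (hl : ∀ x ∈ l, x < n)
    (hbl : b ∉ l) (hbr : b ∉ r) (hbn : b < n) (hx : x ∈ l) (hy : y ∈ r ++ [b]) (hyx : y < x) :
    b < x ∧ ∀ w ∈ r, b < w := by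
  have hlast {w : α} (hw : w ∈ r) (hwx : w < x) : b < w :=
    h.last_lt_of_lt_left hl hbl hbr hbn hx hw hwx
  have hbx : b < x := by
    rcases mem_append.1 hy with hy | hy
    · exact (hlast hy hyx).trans hyx
    · rwa [← mem_singleton.1 hy]
  exact ⟨hbx, fun w hw => (lt_or_ge w x).elim (hlast hw) hbx.trans_le⟩

lemma AvoidsT.pairwise_left (h : AvoidsT (l ++ n :: (r ++ [b]))) (hl : ∀ x ∈ l, x < n)
    (hbl : b ∉ l) : l.Pairwise fun x y => b < y → b < x := by
  refine pairwise_iff_forall_sublist.2 fun {x y} hxy hby => ?_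
  have hnT : ¬ IsTPattern x y n b := h _ _ _ _ (hxy.append (r₁ := [n, b]) (by simp))
  have hyn := hl y (hxy.subset (by simp))
  have hxb : x ≠ b := ne_of_mem_of_not_mem (hxy.subset (by simp)) hbl
  by_contra! hle
  exact hnT (Or.inl ⟨hle.lt_of_ne hxb, hby, hyn⟩)

lemma AvoidsT.pairwise_gt_left {d m t : List α} (h : AvoidsT (d ++ m ++ t)) (hnd : d.Nodup)
    (hz : z ∈ m) (hb : b ∈ t) (hzb : z < b) (hd : ∀ x ∈ d, b < x) : d.Pairwise (· > ·) := by
  refine pairwise_iff_forall_sublist.2 fun {x y} hxy => ?_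
  have hnT : ¬ IsTPattern x y z b :=
    h _ _ _ _ ((hxy.append (singleton_sublist.2 hz)).append (singleton_sublist.2 hb))
  have hne : x ≠ y := by simpa using hnd.sublist hxy
  have hbx := hd x (hxy.subset (by simp))
  by_contra! hle
  exact hnT (Or.inr (Or.inr ⟨hzb, hbx, hle.lt_of_ne hne⟩))

lemma AvoidsT.pairwise_gt_right {t : List α} (h : AvoidsT (t ++ (r ++ [b]))) (hnd : r.Nodup)
    (hz : z ∈ t) (hzb : z < b) (hr : ∀ x ∈ r, b < x) : r.Pairwise (· > ·) := by
  refine pairwise_iff_forall_sublist.2 fun {x y} hxy => ?_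
  have hnT : ¬ IsTPattern z x y b :=
    h _ _ _ _ ((singleton_sublist.2 hz).append (hxy.append (Sublist.refl _)))
  have hne : x ≠ y := by simpa using hnd.sublist hxy
  have hbx := hr x (hxy.subset (by simp))
  by_contra! hle
  exact hnT (Or.inl ⟨hzb, hbx, hle.lt_of_ne hne⟩)

theorem AvoidsT.exists_hook (h : AvoidsT (l ++ n :: (r ++ [b])))
    (hnd : (l ++ n :: (r ++ [b])).Nodup) (hl : ∀ x ∈ l, x < n) (hbn : b < n)
    (hz : z ∈ l ++ n :: (r ++ [b])) (hzb : z < b) (hx : x ∈ l) (hy : y ∈ r ++ [b]) (hyx : y < x) :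
    ∃ d m, l = d ++ m ∧ d ≠ [] ∧ m ≠ [] ∧ d.Pairwise (· > ·) ∧ r.Pairwise (· > ·) ∧
      (∀ x ∈ d, b < x) ∧ (∀ x ∈ r, b < x) ∧ ∀ x ∈ m, x < b := by
  have hndl : l.Nodup := hnd.sublist (by simp)
  have hndr : r.Nodup := (hnd.sublist (by simp : r ++ [b] <+ _)).of_append_left
  have hbl : b ∉ l := fun hbl => disjoint_of_nodup_append hnd hbl (by simp)
  have hbr : b ∉ r := fun hbr =>
    disjoint_of_nodup_append (l₁ := r) (hnd.sublist (by simp)) hbr (mem_singleton_self b)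
  obtain ⟨hbx, hr⟩ := h.last_lt_of_inversion hl hbl hbr hbn hx hy hyx
  have hsplit : l.filter (b < ·) ++ l.filter (fun x => !decide (b < x)) = l :=
    filter_append_filter_not_of_pairwise (by simpa using h.pairwise_left hl hbl)
  have hd : ∀ w ∈ l.filter (b < ·), b < w := by simp
  have hm : ∀ w ∈ l.filter (fun x => !decide (b < x)), w < b := fun w hw => by
    simp only [mem_filter, Bool.not_eq_true', decide_eq_false_iff_not, not_lt] at hw
    exact hw.2.lt_of_ne (ne_of_mem_of_not_mem hw.1 hbl)
  have hzl : z ∈ l := by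
    simp only [mem_append, mem_cons, not_mem_nil, or_false] at hz
    rcases hz with hz | rfl | hz | rfl
    exacts [hz, (hzb.not_gt hbn).elim, (hzb.not_gt (hr z hz)).elim, (hzb.ne rfl).elim]
  have hzm : z ∈ l.filter (fun x => !decide (b < x)) := by simp [hzl, hzb.le]
  refine ⟨_, _, hsplit.symm, ne_nil_of_mem (mem_filter.2 ⟨hx, by simpa using hbx⟩),
    ne_nil_of_mem hzm, ?_, ?_, hd, hr, hm⟩
  · refine AvoidsT.pairwise_gt_left (t := n :: (r ++ [b])) ?_ (hndl.filter _) hzm (by simp) hzb hd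
    rwa [hsplit]
  · have h' : AvoidsT (l ++ (r ++ [b])) := h.sublist (by simp)
    exact h'.pairwise_gt_right hndr hzl hzb hr

end Hook

end Avoid

section PermRange

variable {l m : List ℕ} {n : ℕ}

lemma perm_map_iff_exists {α β : Type*} {f : α → β} {l : List β} {m : List α} :
    l ~ m.map f ↔ ∃ l', l = l'.map f ∧ l' ~ m := by
  change (fun l m => l ~ m.map f) l m ↔ _
  rw [← eq_map_comp_perm]
  rfl

lemma append_cons_perm_range_succ_iff : l ++ n :: m ~ range (n + 1) ↔ l ++ m ~ range n := by
  rw [range_succ, (perm_append_singleton n (range n)).congr_right, perm_middle.congr_left,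
    perm_cons]

lemma append_perm_range_of_lt (h : l ++ m ~ range n) (hlt : ∀ x ∈ l, ∀ y ∈ m, x < y) :
    l ~ range l.length ∧ ∃ m', m = m'.map (l.length + ·) ∧ m' ~ range m.length := by
  have hsort : l.insertionSort (· ≤ ·) ++ m.insertionSort (· ≤ ·) = range n := by
    refine Perm.eq_of_pairwise' (r := (· ≤ ·)) ?_ ?_
      (((perm_insertionSort _ l).append (perm_insertionSort _ m)).trans h)
    · refine pairwise_append.2 ⟨pairwise_insertionSort _ l, pairwise_insertionSort _ m, ?_⟩
      simpa only [mem_insertionSort] using fun x hx y hy => (hlt x hx y hy).le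
    · exact pairwise_lt_range.imp le_of_lt
  have hn : n = l.length + m.length := by simpa using h.length_eq.symm
  rw [hn, range_add] at hsort
  obtain ⟨hl, hm⟩ := append_inj hsort (by simp)
  refine ⟨?_, perm_map_iff_exists.1 ?_⟩
  · rw [← hl]
    exact (perm_insertionSort _ l).symm
  · rw [← hm]
    exact (perm_insertionSort _ m).symm

lemma perm_range_iff_length : l ~ range n ↔ l.length = n ∧ l ~ range l.length := by
  constructor
  · intro h
    obtain rfl : l.length = n := by simpa using h.length_eq
    exact ⟨rfl, h⟩
  · rintro ⟨rfl, h⟩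
    exact h

lemma lt_of_append_cons_perm_range (h : l ++ n :: m ~ range (n + 1)) {x : ℕ} (hx : x ∈ l ++ m) :
    x < n :=
  mem_range.1 ((append_cons_perm_range_succ_iff.1 h).mem_iff.1 hx)

lemma append_cons_inj_of_perm_range {l' m' : List ℕ} (h : l ++ n :: m ~ range (n + 1))
    (heq : l ++ n :: m = l' ++ n :: m') : l = l' ∧ m = m' := by
  have hn : n ∉ l ++ m := fun hn => (lt_of_append_cons_perm_range h hn).false
  rw [mem_append, not_or] at hn
  rw [append_cons_inj_of_notMem hn.1 hn.2] at heq
  exact ⟨heq.1, heq.2.2⟩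

end PermRange

section Constructions

/-- The word `L (max) R⁺`, where `R⁺` is `R` shifted up by `|L|`; if `L` and `R` are permutations
of initial segments, this is the direct sum `L ⊕ (1 ⊖ R)`. -/
def maxJoin (L R : List ℕ) : List ℕ :=
  L ++ (L.length + R.length) :: R.map (L.length + ·)

/-- The word `D⁺ M (max) R⁺ b` with `b = |M|`, where `D⁺` and `R⁺` are `D` and `R` shifted to
lie above `b`. -/
def hookJoin (M D R : List ℕ) : List ℕ :=
  (D.map (M.length + 1 + ·) ++ M) ++
    (M.length + 1 + (D ++ R).length) :: (R.map (M.length + 1 + ·) ++ [M.length])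

/-- The word `w⁺ 0`, where `w⁺` is `w` shifted up by one. -/
def concatZero (w : List ℕ) : List ℕ :=
  w.map (· + 1) ++ [0]

variable {L R M D : List ℕ} {n b : ℕ}

lemma maxJoin_perm_range (hL : L ~ range L.length) (hR : R ~ range R.length) :
    maxJoin L R ~ range (L.length + R.length + 1) := by
  rw [maxJoin, append_cons_perm_range_succ_iff, range_add]
  exact hL.append (hR.map _)

lemma hookJoin_perm_range (hM : M ~ range M.length) (hDR : D ++ R ~ range (D ++ R).length) :
    hookJoin M D R ~ range (M.length + 1 + (D ++ R).length + 1) := by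
  rw [hookJoin, append_cons_perm_range_succ_iff, range_add, range_succ]
  refine Perm.trans ?_ ((hM.append_right _).append (hDR.map _))
  simp only [map_append, perm_iff_count, count_append]
  grind

lemma concatZero_perm_range {w : List ℕ} (hw : w ~ range n) : concatZero w ~ range (n + 1) := by
  rw [range_succ_eq_map]
  exact (perm_append_singleton _ _).trans ((hw.map _).cons 0)

lemma eq_maxJoin_of_lt (h : L ++ n :: R ~ range (n + 1)) (hlt : ∀ x ∈ L, ∀ y ∈ R, x < y) :
    ∃ R', L ++ n :: R = maxJoin L R' ∧ R = R'.map (L.length + ·) ∧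
      L ~ range L.length ∧ R' ~ range R'.length := by
  rw [append_cons_perm_range_succ_iff] at h
  obtain ⟨hL, R', rfl, hR'⟩ := append_perm_range_of_lt h hlt
  have hn : n = L.length + R'.length := by simpa using h.length_eq.symm
  exact ⟨R', by rw [hn, maxJoin], rfl, hL, by simpa using hR'⟩

lemma eq_hookJoin_of_lt (h : (D ++ M) ++ n :: (R ++ [b]) ~ range (n + 1))
    (hM : ∀ x ∈ M, x < b) (hD : ∀ x ∈ D, b < x) (hR : ∀ x ∈ R, b < x) :
    ∃ D' R', (D ++ M) ++ n :: (R ++ [b]) = hookJoin M D' R' ∧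
      D = D'.map (M.length + 1 + ·) ∧ R = R'.map (M.length + 1 + ·) ∧
      M ~ range M.length ∧ D' ++ R' ~ range (D' ++ R').length := by
  rw [append_cons_perm_range_succ_iff] at h
  have hsplit : (M ++ [b]) ++ (D ++ R) ~ range n := Perm.trans (by grind) h
  obtain ⟨hMb, q, hq, hqr⟩ := append_perm_range_of_lt hsplit (by grind)
  obtain ⟨hMr, q', hq', hqr'⟩ := append_perm_range_of_lt hMb (by grind)
  rw [length_append, length_singleton] at hq
  obtain ⟨D', R', rfl, rfl, rfl⟩ := append_eq_map_iff.1 hq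
  obtain rfl : q' = [0] := by simpa using hqr'
  obtain rfl : b = M.length := by simpa using hq'
  have hn : n = M.length + 1 + (D' ++ R').length := by
    simpa [add_assoc, add_comm 1] using hsplit.length_eq.symm
  exact ⟨D', R', by rw [hn, hookJoin], rfl, rfl, hMr, by simpa using hqr⟩

lemma maxJoin_inj {L' R' : List ℕ} (hL : L ~ range L.length) (hR : R ~ range R.length)
    (h : maxJoin L R = maxJoin L' R') : L = L' ∧ R = R' := by
  have hn : L'.length + R'.length = L.length + R.length := by
    have hlen := congrArg length h
    simp only [maxJoin, length_append, length_cons, length_map] at hlen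
    lia
  rw [maxJoin, maxJoin, hn] at h
  obtain ⟨rfl, hRR'⟩ := append_cons_inj_of_perm_range (maxJoin_perm_range hL hR) h
  exact ⟨rfl, map_injective_iff.2 (add_right_injective _) hRR'⟩

lemma hookJoin_inj {M' D' R' : List ℕ} (hM : M ~ range M.length)
    (hDR : D ++ R ~ range (D ++ R).length) (h : hookJoin M D R = hookJoin M' D' R') :
    M = M' ∧ D = D' ∧ R = R' := by
  have hn : M'.length + 1 + (D' ++ R').length = M.length + 1 + (D ++ R).length := by
    have hlen := congrArg length h
    simp only [hookJoin, length_append, length_cons, length_map, length_nil] at hlen ⊢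
    lia
  rw [hookJoin, hookJoin, hn] at h
  obtain ⟨hDM, hRb⟩ := append_cons_inj_of_perm_range (hookJoin_perm_range hM hDR) h
  obtain ⟨hR, hb⟩ := append_inj' hRb rfl
  have hlen : M.length = M'.length := by simpa using hb
  rw [hlen] at hDM hR
  obtain ⟨hD, hM⟩ := append_inj' hDM hlen
  have hinj : Function.Injective (map (M'.length + 1 + ·)) :=
    map_injective_iff.2 (add_right_injective _)
  exact ⟨hM, hinj hD, hinj hR⟩

lemma concatZero_injective : Function.Injective concatZero := fun _ _ h =>
  map_injective_iff.2 (add_left_injective 1) (append_inj' h rfl).1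

lemma exists_eq_concatZero {w : List ℕ} (h : w ++ [0] ~ range (n + 1)) :
    ∃ v, w ++ [0] = concatZero v ∧ v ~ range n := by
  rw [range_succ_eq_map, (perm_append_singleton _ _).congr_left, perm_cons,
    perm_map_iff_exists] at h
  obtain ⟨v, rfl, hv⟩ := h
  exact ⟨v, rfl, hv⟩

end Constructions

section Joins

variable {L R M D : List ℕ}

lemma lt_of_mem_maxJoin (hL : L ~ range L.length) {x y : ℕ} (hx : x ∈ L)
    (hy : y ∈ (L.length + R.length) :: R.map (L.length + ·)) : x < y := by
  have hxL : x < L.length := mem_range.1 (hL.mem_iff.1 hx)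
  simp only [mem_cons, mem_map] at hy
  lia

lemma avoids231_cons_map {i : ℕ} (hR : R ~ range R.length) (h : Avoids231 R) :
    Avoids231 ((i + R.length) :: R.map (i + ·)) := by
  refine ((avoids231_map_iff (add_right_strictMono (a := i))).2 h).cons ?_
  simp only [forall_mem_map, hR.mem_iff, mem_range]
  lia

lemma avoids231_maxJoin (hL : L ~ range L.length) (hR : R ~ range R.length)
    (hL' : Avoids231 L) (hR' : Avoids231 R) : Avoids231 (maxJoin L R) :=
  hL'.append (avoids231_cons_map hR hR') fun _ hx _ => lt_of_mem_maxJoin hL hx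

lemma avoidsT_maxJoin (hL : L ~ range L.length) (hR : R ~ range R.length)
    (hL' : AvoidsT L) (hR' : Avoids231 R) : AvoidsT (maxJoin L R) :=
  hL'.append (avoids231_cons_map hR hR') fun _ hx _ => lt_of_mem_maxJoin hL hx

lemma avoidsT_hookJoin (hM : M ~ range M.length) (hDR : D ++ R ~ range (D ++ R).length)
    (hM' : AvoidsT M) (hD : D.Pairwise (· > ·)) (hR : R.Pairwise (· > ·)) :
    AvoidsT (hookJoin M D R) := by
  have hmono : StrictMono (M.length + 1 + ·) := add_right_strictMono
  have hlt {x : ℕ} (hx : x ∈ M) : x < M.length := mem_range.1 (hM.mem_iff.1 hx)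
  rw [hookJoin, append_assoc]
  refine hM'.decreasing_append_append (hD.map _ fun _ _ h => hmono h) ?_ ?_ ?_
  · have hRlt {x : ℕ} (hx : x ∈ R) : x < (D ++ R).length :=
      mem_range.1 (hDR.mem_iff.1 (mem_append_right D hx))
    refine pairwise_cons.2 ⟨?_, pairwise_append.2 ⟨hR.map _ fun _ _ h => hmono h, by simp, ?_⟩⟩
    · simp only [mem_append, mem_map, mem_singleton]
      grind
    · simp only [forall_mem_map, mem_singleton]
      lia
  · simp only [forall_mem_map]
    grind
  · simp only [mem_cons, mem_append, mem_map]
    grind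

lemma avoidsT_concatZero {w : List ℕ} : AvoidsT (concatZero w) ↔ AvoidsT w := by
  have hmap : AvoidsT (w.map (· + 1)) ↔ AvoidsT w := avoidsT_map_iff add_left_strictMono
  exact ⟨fun h => hmap.1 (h.sublist (sublist_append_left _ _)),
    fun h => (hmap.2 h).concat (by simp)⟩

end Joins

section PermsWith

open Finset.HasAntidiagonal (antidiagonal)

open Classical in
/-- The permutations of `0, …, n - 1`, in one-line notation, that satisfy `P`. -/
noncomputable def permsWith (P : List ℕ → Prop) (n : ℕ) : Finset (List ℕ) :=
  {l ∈ (range n).permutations.toFinset | P l}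

lemma mem_permsWith {P : List ℕ → Prop} {n : ℕ} {l : List ℕ} :
    l ∈ permsWith P n ↔ l ~ range n ∧ P l := by
  simp [permsWith]

lemma length_of_mem_permsWith {P : List ℕ → Prop} {n : ℕ} {l : List ℕ} (h : l ∈ permsWith P n) :
    l.length = n := by
  simpa using (mem_permsWith.1 h).1.length_eq

lemma mem_permsWith_iff_length {P : List ℕ → Prop} {n : ℕ} {l : List ℕ} :
    l ∈ permsWith P n ↔ l.length = n ∧ l ~ range l.length ∧ P l := by
  rw [mem_permsWith, perm_range_iff_length, and_assoc]

lemma permsWith_zero {P : List ℕ → Prop} (h : P []) : permsWith P 0 = {[]} := by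
  ext l
  simp +contextual [mem_permsWith, h]

/-- The decreasing words `D ≠ []` and `R` whose letters together are `0, …, n - 1`. -/
def decreasingPairs (n : ℕ) : Finset (List ℕ × List ℕ) :=
  ((Finset.range n).powerset.erase ∅).image fun S =>
    (S.sort (· ≥ ·), (Finset.range n \ S).sort (· ≥ ·))

lemma sort_append_sort_sdiff_perm_range {n : ℕ} {S : Finset ℕ} (hS : S ⊆ Finset.range n) :
    S.sort (· ≥ ·) ++ (Finset.range n \ S).sort (· ≥ ·) ~ range n := by
  refine perm_of_nodup_nodup_toFinset_eq ?_ nodup_range ?_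
  · exact nodup_append'.2 ⟨S.sort_nodup _, Finset.sort_nodup _ _, fun x => by simp +contextual⟩
  · rw [toFinset_append, Finset.sort_toFinset, Finset.sort_toFinset,
      Finset.union_sdiff_of_subset hS, toFinset_range]

lemma toFinset_sort_of_pairwise_gt {l : List ℕ} (hl : l.Pairwise (· > ·)) :
    l.toFinset.sort (· ≥ ·) = l :=
  (toFinset_sort (· ≥ ·) (hl.imp ne_of_gt)).2 (hl.imp le_of_lt)

lemma mem_decreasingPairs {n : ℕ} {D R : List ℕ} :
    (D, R) ∈ decreasingPairs n ↔
      D ≠ [] ∧ D.Pairwise (· > ·) ∧ R.Pairwise (· > ·) ∧ D ++ R ~ range n := by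
  simp only [decreasingPairs, Finset.mem_image, Finset.mem_erase, Finset.mem_powerset,
    Prod.mk.injEq]
  constructor
  · rintro ⟨S, ⟨hne, hS⟩, rfl, rfl⟩
    refine ⟨?_, (Finset.sortedGT_sort S).pairwise, (Finset.sortedGT_sort _).pairwise,
      sort_append_sort_sdiff_perm_range hS⟩
    simpa [← length_pos_iff, Finset.card_pos, Finset.nonempty_iff_ne_empty] using hne
  · rintro ⟨hne, hD, hR, hDR⟩
    have hdisj : _root_.Disjoint D.toFinset R.toFinset := disjoint_toFinset_iff_disjoint.2
      (disjoint_of_nodup_append (hDR.nodup_iff.2 nodup_range))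
    have hunion : D.toFinset ∪ R.toFinset = Finset.range n := by
      rw [← toFinset_append, toFinset_eq_of_perm _ _ hDR, toFinset_range]
    refine ⟨D.toFinset, ⟨by simpa, ?_⟩, toFinset_sort_of_pairwise_gt hD, ?_⟩
    · exact hunion ▸ Finset.subset_union_left
    · rw [← hunion, Finset.union_sdiff_cancel_left hdisj, toFinset_sort_of_pairwise_gt hR]

lemma card_decreasingPairs (n : ℕ) : (decreasingPairs n).card = 2 ^ n - 1 := by
  rw [decreasingPairs, Finset.card_image_of_injective, Finset.card_erase_of_mem (by simp),
    Finset.card_powerset, Finset.card_range]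
  intro S S' h
  simpa using congrArg (fun p => p.1.toFinset) h

/-- The pairs in `A i × B j` with `i + j = n`: the Cauchy product of counted classes. -/
def sizedProd {α β : Type*} [DecidableEq α] [DecidableEq β] (A : ℕ → Finset α)
    (B : ℕ → Finset β) (n : ℕ) : Finset (α × β) :=
  (antidiagonal n).biUnion fun ij => A ij.1 ×ˢ B ij.2

lemma mem_sizedProd {α β : Type*} [DecidableEq α] [DecidableEq β] {A : ℕ → Finset α}
    {B : ℕ → Finset β} {n : ℕ} {a : α} {b : β} :
    (a, b) ∈ sizedProd A B n ↔ ∃ i j, i + j = n ∧ a ∈ A i ∧ b ∈ B j := by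
  simp [sizedProd]

lemma card_sizedProd_permsWith {β : Type*} [DecidableEq β] (P : List ℕ → Prop)
    (B : ℕ → Finset β) (n : ℕ) :
    (sizedProd (permsWith P) B n).card =
      ∑ ij ∈ antidiagonal n, (permsWith P ij.1).card * (B ij.2).card := by
  rw [sizedProd, Finset.card_biUnion]
  · simp only [Finset.card_product]
  · intro ij hij kl hkl hne
    refine Finset.disjoint_product.2 (Or.inl (Finset.disjoint_left.2 fun l hl hl' => hne ?_))
    have hfst : ij.1 = kl.1 :=
      (length_of_mem_permsWith hl).symm.trans (length_of_mem_permsWith hl')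
    exact (Finset.HasAntidiagonal.antidiagonal_congr hij hkl).2 hfst

end PermsWith

section Classes

open Finset.HasAntidiagonal (antidiagonal)
variable {n : ℕ} {w : List ℕ}

lemma permsWith_avoids231_succ (n : ℕ) :
    permsWith Avoids231 (n + 1) =
      (sizedProd (permsWith Avoids231) (permsWith Avoids231) n).image fun p => maxJoin p.1 p.2 := by
  ext w
  simp only [Finset.mem_image, Prod.exists, mem_sizedProd, mem_permsWith_iff_length]
  constructor
  · rintro ⟨hlen, hperm, hw⟩
    rw [hlen] at hperm
    obtain ⟨L, R, rfl⟩ := append_of_mem (hperm.mem_iff.2 self_mem_range_succ)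
    have hL : ∀ x ∈ L, x < n := fun x hx =>
      lt_of_append_cons_perm_range hperm (mem_append_left R hx)
    obtain ⟨R', heq, rfl, hLp, hRp⟩ := eq_maxJoin_of_lt hperm fun x hx y =>
      hw.lt_of_mem (hperm.nodup_iff.2 nodup_range) hL hx
    refine ⟨L, R', ⟨_, _, ?_, ⟨rfl, hLp, ?_⟩, rfl, hRp, ?_⟩, heq.symm⟩
    · simpa [← add_assoc] using hlen
    · exact hw.sublist (sublist_append_left _ _)
    · refine (avoids231_map_iff (add_right_strictMono (a := L.length))).1 (hw.sublist ?_)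
      exact (sublist_cons_self _ _).trans (sublist_append_right _ _)
  · rintro ⟨L, R, ⟨_, _, rfl, ⟨rfl, hLp, hL⟩, rfl, hRp, hR⟩, rfl⟩
    have hperm := maxJoin_perm_range hLp hRp
    have hlen : (maxJoin L R).length = L.length + R.length + 1 := by simpa using hperm.length_eq
    exact ⟨hlen, by rwa [hlen], avoids231_maxJoin hLp hRp hL hR⟩

lemma card_image_maxJoin (P Q : List ℕ → Prop) (n : ℕ) :
    ((sizedProd (permsWith P) (permsWith Q) n).image fun p => maxJoin p.1 p.2).card =
      ∑ ij ∈ antidiagonal n, (permsWith P ij.1).card * (permsWith Q ij.2).card := by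
  rw [Finset.card_image_of_injOn, card_sizedProd_permsWith]
  rintro ⟨L, R⟩ h ⟨L', R'⟩ _ heq
  simp only [Finset.mem_coe, mem_sizedProd, mem_permsWith_iff_length] at h
  obtain ⟨_, _, _, ⟨_, hL, _⟩, _, hR, _⟩ := h
  exact Prod.ext_iff.2 (maxJoin_inj hL hR heq)

lemma card_permsWith_avoids231 (n : ℕ) : (permsWith Avoids231 n).card = catalan n := by
  induction n using Nat.strong_induction_on with
  | _ n ih =>
    cases n with
    | zero => rw [permsWith_zero .nil, Finset.card_singleton, catalan_zero]
    | succ n =>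
      rw [permsWith_avoids231_succ, card_image_maxJoin, catalan_succ']
      refine Finset.sum_congr rfl fun ij hij => ?_
      rw [Finset.HasAntidiagonal.mem_antidiagonal] at hij
      rw [ih ij.1 (by lia), ih ij.2 (by lia)]

/-- The `T`-avoiding permutations of `0, …, n` whose largest letter `n` is not the first. -/
noncomputable def lateMax (n : ℕ) : Finset (List ℕ) :=
  permsWith (fun w => AvoidsT w ∧ ∃ L R, L ≠ [] ∧ w = L ++ n :: R) (n + 1)

lemma mem_lateMax :
    w ∈ lateMax n ↔ w ~ range (n + 1) ∧ AvoidsT w ∧ ∃ L R, L ≠ [] ∧ w = L ++ n :: R :=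
  mem_permsWith

lemma permsWith_avoidsT_succ (n : ℕ) :
    permsWith AvoidsT (n + 1) = (permsWith AvoidsT n).image (n :: ·) ∪ lateMax n := by
  ext w
  simp only [Finset.mem_union, Finset.mem_image, mem_permsWith, mem_lateMax]
  constructor
  · rintro ⟨hperm, hw⟩
    obtain ⟨L, R, rfl⟩ := append_of_mem (hperm.mem_iff.2 self_mem_range_succ)
    rcases eq_or_ne L [] with rfl | hL
    · exact Or.inl ⟨R, ⟨append_cons_perm_range_succ_iff.1 hperm,
        hw.sublist (sublist_cons_self n R)⟩, rfl⟩
    · exact Or.inr ⟨hperm, hw, L, R, hL, rfl⟩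
  · rintro (⟨l, ⟨hperm, hl⟩, rfl⟩ | ⟨hperm, hw, -⟩)
    · exact ⟨(append_cons_perm_range_succ_iff (l := [])).2 hperm,
        hl.cons fun x hx => mem_range.1 (hperm.mem_iff.1 hx)⟩
    · exact ⟨hperm, hw⟩

lemma card_permsWith_avoidsT_succ (n : ℕ) :
    (permsWith AvoidsT (n + 1)).card = (permsWith AvoidsT n).card + (lateMax n).card := by
  rw [permsWith_avoidsT_succ, Finset.card_union_of_disjoint,
    Finset.card_image_of_injective _ (cons_injective)]
  refine Finset.disjoint_left.2 fun w hw hw' => ?_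
  obtain ⟨l, -, rfl⟩ := Finset.mem_image.1 hw
  obtain ⟨hperm, -, L, R, hL, heq⟩ := mem_lateMax.1 hw'
  exact hL (append_cons_inj_of_perm_range (l := []) hperm heq).1.symm

/-- `T`-avoiding permutations of positive length. -/
noncomputable def nonemptyAvoiders : ℕ → Finset (List ℕ) :=
  permsWith fun w => AvoidsT w ∧ w ≠ []

lemma nonemptyAvoiders_zero : nonemptyAvoiders 0 = ∅ := by
  ext l
  simp +contextual [nonemptyAvoiders, mem_permsWith]

/-- The words `L n R` of `lateMax n` in which every letter of `L` is smaller than every letter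
of `R`. -/
noncomputable def separated (n : ℕ) : Finset (List ℕ) :=
  (sizedProd nonemptyAvoiders (permsWith Avoids231) n).image fun p => maxJoin p.1 p.2

/-- The words `D M (n + 1) R b` of `lateMax (n + 1)` in which `b ≠ 0`, `M` consists of the letters
below `b`, and `D ≠ []` and `R` are decreasing. -/
noncomputable def hooks (n : ℕ) : Finset (List ℕ) :=
  (sizedProd nonemptyAvoiders decreasingPairs n).image fun p => hookJoin p.1 p.2.1 p.2.2

lemma mem_separated :
    w ∈ separated n ↔ ∃ L R, w = maxJoin L R ∧ L.length + R.length = n ∧ L ≠ [] ∧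
      L ~ range L.length ∧ R ~ range R.length ∧ AvoidsT L ∧ Avoids231 R := by
  simp only [separated, nonemptyAvoiders, Finset.mem_image, Prod.exists, mem_sizedProd,
    mem_permsWith_iff_length]
  grind

lemma mem_hooks :
    w ∈ hooks n ↔ ∃ M D R, w = hookJoin M D R ∧ M.length + (D ++ R).length = n ∧
      M ≠ [] ∧ D ≠ [] ∧ M ~ range M.length ∧ D ++ R ~ range (D ++ R).length ∧
      AvoidsT M ∧ D.Pairwise (· > ·) ∧ R.Pairwise (· > ·) := by
  simp only [hooks, nonemptyAvoiders, Finset.mem_image, Prod.exists, mem_sizedProd,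
    mem_permsWith_iff_length, mem_decreasingPairs]
  constructor
  · rintro ⟨M, D, R, ⟨_, _, rfl, ⟨rfl, hMp, hMT, hM⟩, hD, hDd, hRd, hDR⟩, rfl⟩
    obtain rfl := (perm_range_iff_length.1 hDR).1
    exact ⟨M, D, R, rfl, rfl, hM, hD, hMp, hDR, hMT, hDd, hRd⟩
  · rintro ⟨M, D, R, rfl, rfl, hM, hD, hMp, hDR, hMT, hDd, hRd⟩
    exact ⟨M, D, R, ⟨_, _, rfl, ⟨rfl, hMp, hMT, hM⟩, hD, hDd, hRd, hDR⟩, rfl⟩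

end Classes

section LateMax

open Finset.HasAntidiagonal (antidiagonal)

variable {n : ℕ} {L R w : List ℕ}

lemma separated_subset_lateMax (n : ℕ) : separated n ⊆ lateMax n := by
  intro w hw
  obtain ⟨L, R, rfl, rfl, hL, hLp, hRp, hLT, hR⟩ := mem_separated.1 hw
  exact mem_lateMax.2 ⟨maxJoin_perm_range hLp hRp, avoidsT_maxJoin hLp hRp hLT hR, L, _, hL, rfl⟩

lemma hooks_subset_lateMax (n : ℕ) : hooks n ⊆ lateMax (n + 1) := by
  intro w hw
  obtain ⟨M, D, R, rfl, rfl, hM, -, hMp, hDR, hMT, hD, hR⟩ := mem_hooks.1 hw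
  rw [Nat.add_right_comm]
  exact mem_lateMax.2 ⟨hookJoin_perm_range hMp hDR, avoidsT_hookJoin hMp hDR hMT hD hR, _, _,
    append_ne_nil_of_right_ne_nil _ hM, rfl⟩

lemma concatZero_append_cons :
    concatZero (L ++ n :: R) = L.map (· + 1) ++ (n + 1) :: (R.map (· + 1) ++ [0]) := by
  simp [concatZero]

lemma concatZero_mem_lateMax_iff (hw : w ~ range (n + 1)) :
    concatZero w ∈ lateMax (n + 1) ↔ w ∈ lateMax n := by
  have hperm := concatZero_perm_range hw
  obtain ⟨L, R, rfl⟩ := append_of_mem (hw.mem_iff.2 self_mem_range_succ)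
  simp only [mem_lateMax, hw, hperm, true_and, avoidsT_concatZero]
  refine and_congr_right fun _ => ⟨?_, ?_⟩
  · rintro ⟨L', R', hL', heq⟩
    rw [concatZero_append_cons] at hperm heq
    obtain ⟨rfl, -⟩ := append_cons_inj_of_perm_range hperm heq
    exact ⟨L, R, by simpa using hL', rfl⟩
  · rintro ⟨L', R', hL', heq⟩
    exact ⟨L'.map (· + 1), R'.map (· + 1) ++ [0], by simpa using hL',
      by rw [heq, concatZero_append_cons]⟩

lemma append_cons_mem_separated_iff (h : L ++ n :: R ∈ lateMax n) :
    L ++ n :: R ∈ separated n ↔ ∀ x ∈ L, ∀ y ∈ R, x < y := by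
  obtain ⟨hperm, hT, L', R', hL, heq⟩ := mem_lateMax.1 h
  obtain ⟨rfl, rfl⟩ := append_cons_inj_of_perm_range hperm heq
  constructor
  · intro hsep x hx y hy
    obtain ⟨L', R', heq, rfl, -, hLp, -⟩ := mem_separated.1 hsep
    obtain ⟨rfl, rfl⟩ := append_cons_inj_of_perm_range hperm heq
    exact lt_of_mem_maxJoin hLp hx (mem_cons_of_mem _ hy)
  · intro hlt
    obtain ⟨R', heq, rfl, hLp, hRp⟩ := eq_maxJoin_of_lt hperm hlt
    obtain ⟨a, ha⟩ := exists_mem_of_ne_nil L hL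
    have hR : Avoids231 (R'.map (L.length + ·)) :=
      (hT.sublist ((sublist_cons_self _ _).append_left L)).avoids231_of_lt ha (hlt a ha)
    refine mem_separated.2 ⟨L, R', heq, ?_, hL, hLp, hRp, hT.sublist (sublist_append_left _ _),
      (avoids231_map_iff add_right_strictMono).1 hR⟩
    simpa using (append_cons_perm_range_succ_iff.1 hperm).length_eq

lemma mem_hooks_of_inversion {r : List ℕ} {b x y : ℕ}
    (hperm : L ++ (n + 1) :: (r ++ [b]) ~ range (n + 2)) (hT : AvoidsT (L ++ (n + 1) :: (r ++ [b])))
    (hb : b ≠ 0) (hx : x ∈ L) (hy : y ∈ r ++ [b]) (hyx : y < x) :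
    L ++ (n + 1) :: (r ++ [b]) ∈ hooks n := by
  have hlt {x : ℕ} (hx : x ∈ L ++ (r ++ [b])) : x < n + 1 := lt_of_append_cons_perm_range hperm hx
  have hzero : 0 ∈ L ++ (n + 1) :: (r ++ [b]) := hperm.mem_iff.2 (by simp)
  obtain ⟨D, M, rfl, hDne, hM, hD, hr, hbD, hbr, hMb⟩ := hT.exists_hook
    (hperm.nodup_iff.2 nodup_range) (fun x hx => hlt (mem_append_left _ hx)) (hlt (by simp)) hzero
    (Nat.pos_of_ne_zero hb) hx hy hyx
  obtain ⟨D', R', heq, rfl, rfl, hMp, hDR⟩ := eq_hookJoin_of_lt hperm hMb hbD hbr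
  have hmono : StrictMono (M.length + 1 + ·) := add_right_strictMono
  refine mem_hooks.2 ⟨M, D', R', heq, ?_, hM, by simpa using hDne, hMp, hDR, hT.sublist ?_, ?_, ?_⟩
  · have hlen := hperm.length_eq
    simp only [length_append, length_map, length_cons, length_nil, length_range] at hlen ⊢
    lia
  · exact (sublist_append_right _ _).trans (sublist_append_left _ _)
  · exact (pairwise_map.1 hD).imp hmono.lt_iff_lt.1
  · exact (pairwise_map.1 hr).imp hmono.lt_iff_lt.1

lemma lateMax_succ (n : ℕ) :
    lateMax (n + 1) = separated (n + 1) ∪ ((lateMax n).image concatZero ∪ hooks n) := by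
  apply Finset.Subset.antisymm
  · intro w hw
    obtain ⟨hperm, hT, L, R, -, rfl⟩ := mem_lateMax.1 hw
    by_cases hlt : ∀ x ∈ L, ∀ y ∈ R, x < y
    · exact Finset.mem_union_left _ ((append_cons_mem_separated_iff hw).2 hlt)
    refine Finset.mem_union_right _ (Finset.mem_union.2 ?_)
    push Not at hlt
    obtain ⟨x, hx, y, hy, hyx⟩ := hlt
    obtain rfl | ⟨r, b, rfl⟩ := R.eq_nil_or_concat'
    · simp at hy
    rcases eq_or_ne b 0 with rfl | hb
    · rw [← cons_append, ← append_assoc] at hw hperm ⊢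
      obtain ⟨v, heq, hv⟩ := exists_eq_concatZero hperm
      rw [heq] at hw ⊢
      exact Or.inl (Finset.mem_image_of_mem _ ((concatZero_mem_lateMax_iff hv).1 hw))
    · have hxy : x ≠ y := ne_of_mem_of_not_mem hx fun hyL =>
        disjoint_of_nodup_append (hperm.nodup_iff.2 nodup_range) hyL (mem_cons_of_mem _ hy)
      exact Or.inr (mem_hooks_of_inversion hperm hT hb hx hy (hyx.lt_of_ne' hxy))
  · refine Finset.union_subset (separated_subset_lateMax _)
      (Finset.union_subset ?_ (hooks_subset_lateMax n))
    refine Finset.image_subset_iff.2 fun v hv => ?_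
    exact (concatZero_mem_lateMax_iff (mem_lateMax.1 hv).1).2 hv

lemma disjoint_separated :
    Disjoint (separated (n + 1)) ((lateMax n).image concatZero ∪ hooks n) := by
  refine Finset.disjoint_left.2 fun w hsep hw => ?_
  have hlate := separated_subset_lateMax _ hsep
  rcases Finset.mem_union.1 hw with hw | hw
  · obtain ⟨v, hv, rfl⟩ := Finset.mem_image.1 hw
    obtain ⟨-, -, L, R, hL, rfl⟩ := mem_lateMax.1 hv
    rw [concatZero_append_cons] at hsep hlate
    obtain ⟨a, ha⟩ := exists_mem_of_ne_nil L hL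
    have hlt := (append_cons_mem_separated_iff hlate).1 hsep (a + 1) (mem_map_of_mem ha) 0 (by simp)
    exact hlt.not_ge (Nat.zero_le _)
  · obtain ⟨M, D, R, rfl, rfl, -, hD, -⟩ := mem_hooks.1 hw
    rw [hookJoin, Nat.add_right_comm] at hsep hlate
    obtain ⟨a, ha⟩ := exists_mem_of_ne_nil D hD
    have hlt := (append_cons_mem_separated_iff hlate).1 hsep (M.length + 1 + a)
      (mem_append_left _ (mem_map_of_mem ha)) M.length (by simp)
    lia

lemma disjoint_concatZero_hooks : Disjoint ((lateMax n).image concatZero) (hooks n) := by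
  refine Finset.disjoint_left.2 fun w hw hw' => ?_
  obtain ⟨v, -, rfl⟩ := Finset.mem_image.1 hw
  obtain ⟨M, D, R, heq, -, hM, -⟩ := mem_hooks.1 hw'
  rw [concatZero, hookJoin, ← cons_append, ← append_assoc] at heq
  have hb : 0 = M.length := by simpa using (append_inj' heq rfl).2
  exact hM (length_eq_zero_iff.1 hb.symm)

lemma card_separated (n : ℕ) : (separated n).card =
    ∑ ij ∈ antidiagonal n, (nonemptyAvoiders ij.1).card * catalan ij.2 := by
  rw [separated, nonemptyAvoiders, card_image_maxJoin]
  simp only [card_permsWith_avoids231]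

lemma card_hooks (n : ℕ) : (hooks n).card =
    ∑ ij ∈ antidiagonal n, (nonemptyAvoiders ij.1).card * (2 ^ ij.2 - 1) := by
  rw [hooks, Finset.card_image_of_injOn, nonemptyAvoiders, card_sizedProd_permsWith]
  · simp only [card_decreasingPairs]
  rintro ⟨M, D, R⟩ h ⟨M', D', R'⟩ _ heq
  simp only [Finset.mem_coe, mem_sizedProd, nonemptyAvoiders, mem_permsWith_iff_length,
    mem_decreasingPairs] at h
  obtain ⟨_, _, _, ⟨_, hM, _⟩, _, _, _, hDR⟩ := h
  obtain ⟨rfl, rfl, rfl⟩ := hookJoin_inj hM (perm_range_iff_length.1 hDR).2 heq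
  rfl

lemma card_lateMax_succ (n : ℕ) :
    (lateMax (n + 1)).card = (separated (n + 1)).card + ((lateMax n).card + (hooks n).card) := by
  rw [lateMax_succ, Finset.card_union_of_disjoint disjoint_separated,
    Finset.card_union_of_disjoint disjoint_concatZero_hooks,
    Finset.card_image_of_injective _ concatZero_injective]

lemma lateMax_zero : lateMax 0 = separated 0 := by
  refine Finset.Subset.antisymm (fun w hw => ?_) (separated_subset_lateMax 0)
  obtain ⟨hperm, -, L, R, -, rfl⟩ := mem_lateMax.1 hw
  refine (append_cons_mem_separated_iff hw).2 fun x hx => ?_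
  exact absurd (lt_of_append_cons_perm_range hperm (mem_append_left R hx)) x.not_lt_zero

end LateMax

section Bridge

lemma ofFn_sublist_ofFn_iff {α : Type*} {k n : ℕ} {v : Fin k → α} {u : Fin n → α} :
    ofFn v <+ ofFn u ↔ ∃ f : Fin k ↪o Fin n, ∀ i, v i = u (f i) := by
  have hk : (ofFn v).length = k := length_ofFn
  have hn : (ofFn u).length = n := length_ofFn
  rw [sublist_iff_exists_fin_orderEmbedding_get_eq]
  constructor
  · rintro ⟨f, hf⟩
    refine ⟨(Fin.castOrderIso hk.symm).toOrderEmbedding.trans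
      (f.trans (Fin.castOrderIso hn).toOrderEmbedding), fun i => ?_⟩
    simpa [Fin.cast] using hf (Fin.cast hk.symm i)
  · rintro ⟨f, hf⟩
    refine ⟨(Fin.castOrderIso hk).toOrderEmbedding.trans
      (f.trans (Fin.castOrderIso hn.symm).toOrderEmbedding), fun i => ?_⟩
    simpa [Fin.cast] using hf (Fin.cast hk i)

/-- The one-line notation of `π`. -/
def oneLine {n : ℕ} (π : Equiv.Perm (Fin n)) : List ℕ :=
  ofFn fun i => (π i : ℕ)

lemma containsPattern_iff_sublist {n k : ℕ} {π : Equiv.Perm (Fin n)} {σ : Fin k → Fin k} :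
    ContainsPattern π σ ↔
      ∃ v : Fin k → ℕ, ofFn v <+ oneLine π ∧ ∀ a b, σ a < σ b ↔ v a < v b := by
  simp only [ContainsPattern, oneLine, ofFn_sublist_ofFn_iff]
  constructor
  · rintro ⟨f, hf⟩
    exact ⟨fun i => π (f i), ⟨f, fun _ => rfl⟩, hf⟩
  · rintro ⟨v, ⟨f, hv⟩, hσ⟩
    exact ⟨f, by simpa only [hv, Fin.val_fin_lt] using hσ⟩

lemma isTPattern_iff {v : Fin 4 → ℕ} : IsTPattern (v 0) (v 1) (v 2) (v 3) ↔
    ∃ σ ∈ ({![0,2,3,1], ![1,3,0,2], ![2,3,0,1]} : Set (Fin 4 → Fin 4)),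
      ∀ a b, σ a < σ b ↔ v a < v b := by
  simp only [Set.mem_insert_iff, Set.mem_singleton_iff, exists_eq_or_imp, exists_eq_left]
  refine or_congr ?_ (or_congr ?_ ?_) <;> simp [Fin.forall_fin_succ] <;> omega

lemma forall_not_containsPattern_iff {n : ℕ} {π : Equiv.Perm (Fin n)} :
    (∀ σ ∈ ({![0,2,3,1], ![1,3,0,2], ![2,3,0,1]} : Set (Fin 4 → Fin 4)),
      ¬ ContainsPattern π σ) ↔ AvoidsT (oneLine π) := by
  have hquad : AvoidsT (oneLine π) ↔
      ∀ v : Fin 4 → ℕ, ofFn v <+ oneLine π → ¬ IsTPattern (v 0) (v 1) (v 2) (v 3) := by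
    refine ⟨fun h v hv => h _ _ _ _ (by simpa using hv), fun h a b c d hs => ?_⟩
    exact h ![a, b, c, d] (by simpa using hs)
  rw [hquad]
  simp only [isTPattern_iff, containsPattern_iff_sublist]
  grind

lemma oneLine_injective {n : ℕ} : Function.Injective (oneLine (n := n)) := by
  intro π ρ h
  ext i
  exact congrFun (ofFn_injective h) i

lemma oneLine_perm_range {n : ℕ} (π : Equiv.Perm (Fin n)) : oneLine π ~ range n := by
  rw [← map_coe_finRange_eq_range, ← ofFn_eq_map]
  exact Equiv.Perm.ofFn_comp_perm π fun i : Fin n => (i : ℕ)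

lemma exists_oneLine_eq {n : ℕ} {l : List ℕ} (h : l ~ range n) :
    ∃ π : Equiv.Perm (Fin n), oneLine π = l := by
  have hlen : l.length = n := by simpa using h.length_eq
  have hlt (i : Fin n) : l[i] < n := mem_range.1 (h.mem_iff.1 (getElem_mem _))
  have hinj : Function.Injective fun i : Fin n => (⟨l[i], hlt i⟩ : Fin n) := fun i j hij =>
    Fin.ext (((h.nodup_iff.2 nodup_range).getElem_inj_iff).1 (congrArg Fin.val hij))
  refine ⟨Equiv.ofBijective _ (Finite.injective_iff_bijective.1 hinj), ?_⟩
  exact ext_getElem (by simp [oneLine, hlen]) (by simp [oneLine])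

lemma avoiderCount_eq_card_permsWith (n : ℕ) :
    avoiderCount {![0,2,3,1], ![1,3,0,2], ![2,3,0,1]} n = (permsWith AvoidsT n).card := by
  have himage : oneLine '' {π : Equiv.Perm (Fin n) | AvoidsT (oneLine π)} =
      permsWith AvoidsT n := by
    ext l
    constructor
    · rintro ⟨π, hπ, rfl⟩
      exact mem_permsWith.2 ⟨oneLine_perm_range π, hπ⟩
    · intro hl
      obtain ⟨hperm, hT⟩ := mem_permsWith.1 hl
      obtain ⟨π, rfl⟩ := exists_oneLine_eq hperm
      exact ⟨π, hT, rfl⟩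
  rw [← Set.ncard_coe_finset, ← himage, Set.ncard_image_of_injective _ oneLine_injective]
  simp only [avoiderCount, forall_not_containsPattern_iff]
  rfl

end Bridge

end Words

section GF

/-- The generating function of a counted class. -/
noncomputable def cardGF {α : Type*} (A : ℕ → Finset α) : ℚ⟦X⟧ :=
  PowerSeries.mk fun n => ((A n).card : ℚ)

lemma mk_two_pow_sub_one_mul :
    (PowerSeries.mk fun n => 2 ^ n - 1 : ℚ⟦X⟧) * ((1 - X) * (1 - 2 * X)) = X := by
  have hone : (PowerSeries.mk 1 : ℚ⟦X⟧) * (1 - X) = 1 := mk_one_mul_one_sub_eq_one ℚ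
  have htwo : (PowerSeries.mk fun n => 2 ^ n : ℚ⟦X⟧) * (1 - 2 * X) = 1 := by
    have h := congrArg (rescale (2 : ℚ)) hone
    simpa [rescale_mk, rescale_X, map_ofNat] using h
  have hsub : (PowerSeries.mk fun n => 2 ^ n - 1 : ℚ⟦X⟧) =
      (PowerSeries.mk fun n => 2 ^ n) - PowerSeries.mk 1 := by
    ext n
    simp
  rw [hsub]
  linear_combination (1 - X) * htwo - (1 - 2 * X) * hone

lemma cardGF_permsWith_avoidsT :
    cardGF (permsWith AvoidsT) = 1 + X * (cardGF (permsWith AvoidsT) + cardGF lateMax) := by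
  ext n
  cases n with
  | zero => simp [cardGF, permsWith_zero (P := AvoidsT) quadruplewise_nil]
  | succ n => simp [cardGF, card_permsWith_avoidsT_succ, coeff_succ_X_mul]

lemma cardGF_permsWith_avoidsT_eq_one_add :
    cardGF (permsWith AvoidsT) = 1 + cardGF nonemptyAvoiders := by
  ext n
  cases n with
  | zero => simp [cardGF, permsWith_zero (P := AvoidsT) quadruplewise_nil, nonemptyAvoiders_zero]
  | succ n =>
    have h : permsWith AvoidsT (n + 1) = nonemptyAvoiders (n + 1) := by
      ext w
      simp only [nonemptyAvoiders, mem_permsWith_iff_length]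
      grind
    simp [cardGF, h, coeff_one]

lemma cardGF_separated : cardGF separated = cardGF nonemptyAvoiders * catalanGF := by
  ext n
  simp [cardGF, catalanGF, card_separated, coeff_mul]

lemma cardGF_hooks :
    cardGF hooks = cardGF nonemptyAvoiders * PowerSeries.mk fun n => 2 ^ n - 1 := by
  ext n
  simp [cardGF, card_hooks, coeff_mul]

lemma cardGF_lateMax : cardGF lateMax = cardGF separated + X * (cardGF lateMax + cardGF hooks) := by
  ext n
  cases n with
  | zero => simp [cardGF, lateMax_zero]
  | succ n => simp [cardGF, card_lateMax_succ, coeff_succ_X_mul]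

lemma avoiderGF_eq_cardGF :
    avoiderGF {![0,2,3,1], ![1,3,0,2], ![2,3,0,1]} = cardGF (permsWith AvoidsT) :=
  congrArg PowerSeries.mk (funext fun n => congrArg Nat.cast (avoiderCount_eq_card_permsWith n))

end GF

theorem statement_18 :
    (((X : PowerSeries ℚ)^2 - 3*X + 1) * (2*X^2 - 2*X + 1) - X * (1 - 2*X) * (1 - X) * catalanGF)
        * (avoiderGF ({![0,2,3,1], ![1,3,0,2], ![2,3,0,1]} : Set (Fin 4 → Fin 4)) - 1) =
      X * (1 - X)^2 * (1 - 2*X) := by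
  have hA := cardGF_permsWith_avoidsT
  have hQ := cardGF_lateMax
  rw [cardGF_permsWith_avoidsT_eq_one_add] at hA
  rw [cardGF_separated, cardGF_hooks] at hQ
  rw [avoiderGF_eq_cardGF, cardGF_permsWith_avoidsT_eq_one_add]
  linear_combination (1 - X) ^ 2 * (1 - 2 * X) * hA + X * (1 - X) * (1 - 2 * X) * hQ +
    X ^ 2 * cardGF nonemptyAvoiders * mk_two_pow_sub_one_mul
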